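/- Let p ∈ {47, 59, 67, 71, 73, 79, 83}. Let α_red > 0 satisfy α_red² ∈ [1, 1.5] (mod p), i.e., there is an integer m with 1 ≤ α_red² − pm ≤ 1.5, and let α_blue > 0 satisfy α_blue² = b + ε, where b is an integer not divisible by p and 0 ≤ ε ≤ (4p⁵)^{-1}. Let α = α_blue/α_red. Then: (1) if ε = 0, then E^n ↛ (ℓ_3, αℓ_{p²}); (2) if ε > 0 and p = 59, then E^n ↛ (ℓ_3, αℓ_{2p²−2p+1}) = E^n ↛ (ℓ_3, αℓ_6845). -/

import Mathlib

/-!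
Colour `x` red when `⌊αred² ‖x‖²⌋ mod p` lies in a suitable set `R` of residues.

*Red.* On a unit-step progression the second difference of `αred² ‖·‖²` is `2 αred²`, which is in
`[2, 3]` modulo `p`; the fractional parts contribute something in `(-2, 2)`, so the floors `a, b, c`
satisfy `a - 2 b + c ∈ {1, 2, 3, 4}` modulo `p`. Hence `R` only has to avoid these patterns.

*Blue.* On a blue progression `αred² ‖·‖²` has the form `A + B k + b k² + ε k²`. By the pigeonhole
argument of `exists_linear_floor`, the available range of `k` contains representatives of all
residue classes modulo `p` on which `⌊A + B k + ε k²⌋` is, modulo `p`, an affine function of `k`.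
So `⌊αred² ‖·‖²⌋` takes all the values of a quadratic polynomial over `ZMod p` with leading
coefficient `b ≠ 0`. It is therefore enough that `R` meets every translate of the set of squares
and of the set of nonresidues with zero.

For each of the seven primes a set `R` with at most six elements has both properties
(`exists_redResidues`).
-/

/-! ### Residue sets meeting all quadratics -/

/-- `R` is a list of residues modulo `p` avoiding `a - 2 b + c ∈ {1, 2, 3, 4}` and meeting every
translate of `{w ^ 2}` and of `{g * w ^ 2}`, where every residue is of the form `v ^ 2` or
`g * v ^ 2`. All of this is phrased with natural-number remainders, so that it can be decided by
fast arithmetic. -/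
def IsRedResidues (p g : ℕ) (R : List ℕ) : Prop :=
  (∀ a ∈ R, ∀ b ∈ R, ∀ c ∈ R, ∀ i < 4, (a + c) % p ≠ (2 * b + i + 1) % p) ∧
  (∀ a < p, ∃ v < p, v * v % p = a ∨ g * (v * v) % p = a) ∧
  (∀ t < p, ∃ r ∈ R, ∃ w < p, (t + w * w) % p = r % p) ∧
  (∀ t < p, ∃ r ∈ R, ∃ w < p, (t + g * (w * w)) % p = r % p)

instance (p g : ℕ) (R : List ℕ) : Decidable (IsRedResidues p g R) := by
  unfold IsRedResidues; infer_instance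

lemma exists_redResidues (p : ℕ) (hp : p ∈ ({47, 59, 67, 71, 73, 79, 83} : Finset ℕ)) :
    p.Prime ∧ 2 < p ∧ ∃ g R, IsRedResidues p g R := by
  simp only [Finset.mem_insert, Finset.mem_singleton] at hp
  rcases hp with rfl | rfl | rfl | rfl | rfl | rfl | rfl
  · exact ⟨by norm_num, by norm_num, 5, [0, 16, 10, 42, 37], by decide +kernel⟩
  · exact ⟨by norm_num, by norm_num, 2, [0, 10, 5, 15, 25, 20], by decide +kernel⟩
  · exact ⟨by norm_num, by norm_num, 2, [0, 6, 37, 47, 52, 42], by decide +kernel⟩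
  · exact ⟨by norm_num, by norm_num, 7, [0, 6, 17, 23, 28, 39], by decide +kernel⟩
  · exact ⟨by norm_num, by norm_num, 5, [0, 7, 12, 22, 29, 51], by decide +kernel⟩
  · exact ⟨by norm_num, by norm_num, 3, [0, 7, 12, 22, 32, 37], by decide +kernel⟩
  · exact ⟨by norm_num, by norm_num, 2, [0, 8, 15, 59, 46, 53], by decide +kernel⟩

/-- A quadratic polynomial over `ZMod p` takes a value in `R`: complete the square. -/
lemma IsRedResidues.exists_quadratic {p g : ℕ} [Fact p.Prime] (hp2 : 2 < p) {R : List ℕ}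
    (h : IsRedResidues p g R) (b c y : ZMod p) (hb : b ≠ 0) :
    ∃ s : ZMod p, ∃ r ∈ R, b * s ^ 2 + c * s + y = (r : ZMod p) := by
  obtain ⟨-, hsq, h₁, h₂⟩ := h
  have h2 : (2 : ZMod p) ≠ 0 := by
    intro h0
    have : ((2 : ℕ) : ZMod p) = 0 := by exact_mod_cast h0
    rw [ZMod.natCast_eq_zero_iff] at this
    exact absurd (Nat.le_of_dvd (by norm_num) this) (by omega)
  -- It suffices to treat `b = u v²` for a multiplier `u` whose square multiples `R` meets.
  have key : ∀ u v : ZMod p, b = u * v ^ 2 →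
      (∀ t : ZMod p, ∃ r ∈ R, ∃ w : ZMod p, t + u * w ^ 2 = (r : ZMod p)) →
      ∃ s : ZMod p, ∃ r ∈ R, b * s ^ 2 + c * s + y = (r : ZMod p) := by
    intro u v huv hu
    have hv : v ≠ 0 := by rintro rfl; apply hb; rw [huv]; ring
    have hu0 : u ≠ 0 := by rintro rfl; apply hb; rw [huv]; ring
    obtain ⟨r, hr, w, hw⟩ := hu (y - c ^ 2 / (2 ^ 2 * b))
    refine ⟨w / v - c / (2 * b), r, hr, ?_⟩
    rw [← hw, huv]
    field_simp
    ring
  have cast_eq : ∀ m k : ℕ, m % p = k % p → (m : ZMod p) = (k : ZMod p) := fun m k hmk =>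
    (ZMod.natCast_eq_natCast_iff' m k p).2 hmk
  obtain ⟨v, -, hv⟩ := hsq b.val (ZMod.val_lt b)
  rcases hv with hv | hv
  · refine key 1 v ?_ fun t => ?_
    · have := cast_eq (v * v) b.val (by rw [hv, Nat.mod_eq_of_lt (ZMod.val_lt b)])
      rw [ZMod.natCast_zmod_val] at this
      rw [← this]; push_cast; ring
    · obtain ⟨r, hr, w, -, hw⟩ := h₁ t.val (ZMod.val_lt t)
      refine ⟨r, hr, w, ?_⟩
      rw [← cast_eq _ _ hw]; push_cast; rw [ZMod.natCast_zmod_val]; ring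
  · refine key g v ?_ fun t => ?_
    · have := cast_eq (g * (v * v)) b.val (by rw [hv, Nat.mod_eq_of_lt (ZMod.val_lt b)])
      rw [ZMod.natCast_zmod_val] at this
      rw [← this]; push_cast; ring
    · obtain ⟨r, hr, w, -, hw⟩ := h₂ t.val (ZMod.val_lt t)
      refine ⟨r, hr, w, ?_⟩
      rw [← cast_eq _ _ hw]; push_cast; rw [ZMod.natCast_zmod_val]; ring

/-! ### Linear floors along residue classes -/

/-- A quadratic `G` with leading coefficient `η` that is nonnegative at `0` and `p` but negative at
`j ∈ [0, p)` has `η > 0` and, if `η` is small, a value in `[0, 1)` at `j + p`: the negative value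
forces `G 0` and `G p` to be small. The values at `0`, `p`, `j`, `j + p` are `a`, `b`, `x`, `y`. -/
lemma convex_dip {p j η a b x y : ℝ} (hj0 : 0 ≤ j) (hj : j < p) (ha : 0 ≤ a) (hb : 0 ≤ b)
    (hη : 0 ≤ η) (hη1 : 4 * p ^ 2 * η < 1) (hx : x < 0)
    (hjx : p * x = (p - j) * a + j * b + p * η * (j * (j - p)))
    (hjy : p * y = (p - (j + p)) * a + (j + p) * b + p * η * ((j + p) * (j + p - p))) :
    0 < η ∧ 0 ≤ y ∧ y < 1 := by
  have hp : 0 < p := hj0.trans_lt hj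
  have hpj : 0 < p - j := by linarith
  have hsum : (p - j) * a + j * b < p * η * (j * (p - j)) := by
    have := mul_neg_of_pos_of_neg hp hx
    linarith
  have ha' : a < p * η * j := by
    have h1 : 0 ≤ j * b := mul_nonneg hj0 hb
    have h2 : (p - j) * a < (p - j) * (p * η * j) := by linarith
    exact lt_of_mul_lt_mul_left h2 hpj.le
  have hb' : b < p * η * (p - j) := by
    have h1 : 0 ≤ (p - j) * a := mul_nonneg hpj.le ha
    have h2 : j * b < j * (p * η * (p - j)) := by linarith
    exact lt_of_mul_lt_mul_left h2 hj0
  have hpη : 0 ≤ p * η := by positivity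
  refine ⟨?_, ?_, ?_⟩
  · rcases hη.eq_or_lt with h | h
    · rw [← h] at ha'; simp at ha'; linarith
    · exact h
  · have h3 : j * a ≤ j * (p * η * j) := mul_le_mul_of_nonneg_left ha'.le hj0
    have h4 : 0 ≤ (j + p) * b := mul_nonneg (by linarith) hb
    have h5 : 0 ≤ p * η * (j * p) := by positivity
    have : 0 ≤ p * y := by linarith
    exact nonneg_of_mul_nonneg_right this hp
  · have h3 : 0 ≤ j * a := mul_nonneg hj0 ha
    have h4 : (j + p) * b ≤ (j + p) * (p * η * (p - j)) :=
      mul_le_mul_of_nonneg_left hb'.le (by linarith)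
    have h5 : p * y ≤ p * η * ((j + p) * p) := by linarith
    have h6 : p * η * ((j + p) * p) ≤ p * η * ((p + p) * p) := by gcongr
    have h7 : p * (4 * p ^ 2 * η) < p * 1 := mul_lt_mul_of_pos_left hη1 hp
    have h8 : 0 ≤ p * η * (p * p) := by positivity
    have h9 : p * y < p * 1 := by linarith
    exact lt_of_mul_lt_mul_left h9 hp.le

/-- Every residue class modulo `p` has a representative `k` in the range on which
`⌊A + B k + ε k²⌋` is affine modulo `p`, with the same affine function for all classes.

If the `p²` pairs `(k, ⌊A + B k + ε k²⌋)`, `k < p²`, are distinct modulo `p`, they exhaust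
`(ZMod p)²`. Otherwise two of them agree, say those at `k₀` and `k₀ + p d`; then `0 < d < p`, and
convexity of the quadratic keeps its values along `k₀ + d j`, `0 ≤ j ≤ p`, below the line of slope
prescribed by these two pairs, plus one. They can drop under that line only when `ε > 0`, and at
such a `j` the index `j + p` is back on the right side. -/
lemma exists_linear_floor (p : ℕ) [Fact p.Prime] (A B ε : ℝ) (hε₀ : 0 ≤ ε)
    (hε₁ : ε ≤ (4 * (p : ℝ) ^ 5)⁻¹) :
    ∃ c y : ZMod p, ∀ s : ZMod p, ∃ k : ℕ, (k : ZMod p) = s ∧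
      ((⌊A + B * k + ε * (k : ℝ) ^ 2⌋ : ℤ) : ZMod p) = y + c * s ∧
      (ε = 0 → k < p ^ 2) ∧ k < 2 * p ^ 2 - 2 * p + 1 := by
  have hp : p.Prime := Fact.out
  have hp1 : 2 ≤ p := hp.two_le
  have hpR : (0 : ℝ) < p := by exact_mod_cast hp.pos
  have hle : p ^ 2 ≤ 2 * p ^ 2 - 2 * p + 1 := by
    obtain ⟨q, rfl⟩ := Nat.exists_eq_add_of_le hp1
    have : 2 * (2 + q) ^ 2 - 2 * (2 + q) = 2 * (2 + q) * (1 + q) := by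
      rw [Nat.sub_eq_iff_eq_add (by nlinarith)]; ring
    rw [this]; nlinarith
  set f : ℕ → ℤ := fun k => ⌊A + B * k + ε * (k : ℝ) ^ 2⌋ with hf
  let F : Fin (p ^ 2) → ZMod p × ZMod p := fun k => ((k : ℕ), (f k : ZMod p))
  by_cases hinj : Function.Injective F
  · have hsurj : Function.Surjective F := by
      refine ((Fintype.bijective_iff_injective_and_card F).2 ⟨hinj, ?_⟩).2
      simp [ZMod.card, sq]
    refine ⟨0, 0, fun s => ?_⟩
    obtain ⟨k, hk⟩ := hsurj (s, 0)
    have h1 := congrArg Prod.fst hk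
    have h2 := congrArg Prod.snd hk
    refine ⟨k, h1, ?_, fun _ => k.2, k.2.trans_le hle⟩
    rw [zero_mul, add_zero]
    exact h2
  -- Two indices `k₀ < k₁` collide modulo `p`.
  obtain ⟨k₀, k₁, hlt, hk₁, hk, hfl⟩ : ∃ k₀ k₁ : ℕ, k₀ < k₁ ∧ k₁ < p ^ 2 ∧
      (k₀ : ZMod p) = k₁ ∧ (f k₀ : ZMod p) = f k₁ := by
    simp only [Function.Injective, not_forall] at hinj
    obtain ⟨a, a', haa, hne⟩ := hinj
    have h1 := congrArg Prod.fst haa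
    have h2 := congrArg Prod.snd haa
    rcases lt_or_gt_of_ne (fun h => hne (Fin.ext h) : (a : ℕ) ≠ a') with h | h
    · exact ⟨a, a', h, a'.2, h1, h2⟩
    · exact ⟨a', a, h, a.2, h1.symm, h2.symm⟩
  obtain ⟨d, hd⟩ : p ∣ k₁ - k₀ :=
    (Nat.modEq_iff_dvd' hlt.le).1 ((ZMod.natCast_eq_natCast_iff _ _ _).1 hk)
  obtain ⟨c, hc⟩ : (p : ℤ) ∣ f k₁ - f k₀ :=
    ((ZMod.intCast_eq_intCast_iff_dvd_sub _ _ _).1 hfl)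
  have hk₁' : k₁ = k₀ + p * d := by omega
  have hd0 : 0 < d := by
    rcases Nat.eq_zero_or_pos d with rfl | h
    · simp at hk₁'; omega
    · exact h
  have hdp : d < p := by
    by_contra! h
    nlinarith
  have hdZ : (d : ZMod p) ≠ 0 := by
    rw [Ne, ZMod.natCast_eq_zero_iff]
    exact fun h => absurd (Nat.le_of_dvd hd0 h) (by omega)
  refine ⟨c / d, f k₀ - c / d * k₀, fun s => ?_⟩
  obtain ⟨j, hjp, hj⟩ : ∃ j : ℕ, j < p ∧ (d : ZMod p) * j = s - k₀ :=
    ⟨((s - k₀) / d : ZMod p).val, ZMod.val_lt _, by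
      rw [ZMod.natCast_zmod_val]; field_simp⟩
  -- The defect of the quadratic from the line through the two colliding pairs.
  let G : ℝ → ℝ := fun x => A + B * (k₀ + d * x) + ε * (k₀ + d * x) ^ 2 - f k₀ - c * x
  have hG0 : 0 ≤ G 0 ∧ G 0 < 1 := by
    have h1 := Int.floor_le (A + B * k₀ + ε * (k₀ : ℝ) ^ 2)
    have h2 := Int.lt_floor_add_one (A + B * k₀ + ε * (k₀ : ℝ) ^ 2)
    have h3 : G 0 = A + B * k₀ + ε * (k₀ : ℝ) ^ 2 - f k₀ := by simp [G]
    rw [h3]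
    constructor <;> simp only [hf] <;> linarith
  have hGp : 0 ≤ G p ∧ G p < 1 := by
    have h1 := Int.floor_le (A + B * k₁ + ε * (k₁ : ℝ) ^ 2)
    have h2 := Int.lt_floor_add_one (A + B * k₁ + ε * (k₁ : ℝ) ^ 2)
    have h3 : G p = A + B * k₁ + ε * (k₁ : ℝ) ^ 2 - f k₁ := by
      have : (f k₁ : ℝ) = f k₀ + p * c := by
        have : f k₁ = f k₀ + p * c := by linarith
        rw [this]; push_cast; ring
      rw [this, hk₁']
      simp only [G]; push_cast; ring
    rw [h3]
    constructor <;> simp only [hf] <;> linarith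
  have hGx : ∀ x : ℝ, p * G x = (p - x) * G 0 + x * G p + p * (ε * d ^ 2) * (x * (x - p)) := by
    intro x; simp only [G]; ring
  -- A point of the progression where the defect is in `[0, 1)` has the required floor.
  have hgood : ∀ i : ℕ, (i : ZMod p) = j → 0 ≤ G i → G i < 1 →
      ((k₀ + d * i : ℕ) : ZMod p) = s ∧
      (f (k₀ + d * i) : ZMod p) = f k₀ - c / d * k₀ + c / d * s := by
    intro i hi h0 h1
    constructor
    · push_cast; rw [hi, hj]; ring
    · have : f (k₀ + d * i) = f k₀ + c * i := by
        simp only [hf]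
        rw [Int.floor_eq_iff]
        simp only [G, hf] at h0 h1
        push_cast
        constructor <;> linarith
      rw [this]
      have hs : s = d * j + k₀ := by rw [hj]; ring
      push_cast
      rw [hi, hs]
      field_simp
      ring
  have hjR : (j : ℝ) < p := by exact_mod_cast hjp
  have hj0 : (0 : ℝ) ≤ j := Nat.cast_nonneg j
  set η : ℝ := ε * d ^ 2 with hη
  have hη0 : 0 ≤ η := by positivity
  have hGj1 : G j < 1 := by
    have h := hGx j
    have : p * η * (j * (j - p)) ≤ 0 :=
      mul_nonpos_of_nonneg_of_nonpos (by positivity)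
        (mul_nonpos_of_nonneg_of_nonpos hj0 (by linarith))
    have h1 : (p - j) * G 0 < (p - j) * 1 := mul_lt_mul_of_pos_left hG0.2 (by linarith)
    have h2 : j * G p ≤ j * 1 := mul_le_mul_of_nonneg_left hGp.2.le hj0
    nlinarith
  have hbd : k₀ + d * j < p ^ 2 := by
    have : d * j ≤ d * p := Nat.mul_le_mul_left _ hjp.le
    rw [hk₁'] at hk₁
    linarith [mul_comm p d]
  by_cases hneg : 0 ≤ G j
  · obtain ⟨h1, h2⟩ := hgood j rfl hneg hGj1
    exact ⟨_, h1, h2, fun _ => hbd, hbd.trans_le hle⟩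
  push Not at hneg
  have hη1 : 4 * p ^ 2 * η < 1 := by
    have hdR : (d : ℝ) ^ 2 ≤ p ^ 2 := by
      have : (d : ℝ) ≤ p := by exact_mod_cast hdp.le
      gcongr
    calc 4 * (p : ℝ) ^ 2 * η ≤ 4 * (p : ℝ) ^ 2 * ((4 * (p : ℝ) ^ 5)⁻¹ * (p : ℝ) ^ 2) := by
          rw [hη]; gcongr
      _ = 1 / (p : ℝ) := by field_simp
      _ < 1 := by
          rw [div_lt_one hpR]; exact_mod_cast hp.one_lt
  obtain ⟨hηpos, hn, hl⟩ := convex_dip hj0 hjR hG0.1 hGp.1 hη0 hη1 hneg (hGx j) (hGx (j + p))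
  obtain ⟨h1, h2⟩ := hgood (j + p) (by simp) (by push_cast; exact hn) (by push_cast; exact hl)
  refine ⟨_, h1, h2, fun h0 => ?_, ?_⟩
  · rw [hη, h0, zero_mul] at hηpos
    exact absurd hηpos (lt_irrefl 0)
  · obtain ⟨q, rfl⟩ := Nat.exists_eq_add_of_le' hp1
    have e : 2 * (q + 2) ^ 2 - 2 * (q + 2) = 2 * (q + 2) * (q + 1) := by
      rw [Nat.sub_eq_iff_eq_add (by nlinarith)]; ring
    rw [e]
    have h3 : d * j ≤ (q + 1) * (q + 1) := Nat.mul_le_mul (by omega) (by omega)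
    rw [hk₁'] at hk₁
    nlinarith

/-! ### Squared norms along progressions -/

lemma norm_sq_progression {n : ℕ} (x v : EuclideanSpace ℝ (Fin n)) (k : ℝ) :
    ‖x + k • v‖ ^ 2 = ‖x‖ ^ 2 + 2 * k * inner ℝ x v + k ^ 2 * ‖v‖ ^ 2 := by
  rw [norm_add_sq_real, inner_smul_right, norm_smul, mul_pow, Real.norm_eq_abs, sq_abs]
  ring

/-- The second difference of the floors along a progression whose second difference is in `[2, 3]`
modulo `p`. -/
lemma floor_second_difference (q₀ q₁ q₂ : ℝ) (p : ℕ) (m : ℤ)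
    (h₁ : 2 ≤ q₀ - 2 * q₁ + q₂ - 2 * (p * m)) (h₂ : q₀ - 2 * q₁ + q₂ - 2 * (p * m) ≤ 3) :
    ∃ i < 4, ⌊q₀⌋ + ⌊q₂⌋ = 2 * ⌊q₁⌋ + 2 * (p * m) + ((i : ℕ) + 1 : ℤ) := by
  have a0 := Int.floor_le q₀
  have a1 := Int.floor_le q₁
  have a2 := Int.floor_le q₂
  have b0 := Int.lt_floor_add_one q₀
  have b1 := Int.lt_floor_add_one q₁
  have b2 := Int.lt_floor_add_one q₂
  have lo : (0 : ℤ) < ⌊q₀⌋ + ⌊q₂⌋ - 2 * ⌊q₁⌋ - 2 * (p * m) := by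
    have : (0 : ℝ) < ((⌊q₀⌋ + ⌊q₂⌋ - 2 * ⌊q₁⌋ - 2 * (p * m) : ℤ) : ℝ) := by
      push_cast; linarith
    exact_mod_cast this
  have hi : ⌊q₀⌋ + ⌊q₂⌋ - 2 * ⌊q₁⌋ - 2 * (p * m) < (5 : ℤ) := by
    have : ((⌊q₀⌋ + ⌊q₂⌋ - 2 * ⌊q₁⌋ - 2 * (p * m) : ℤ) : ℝ) < (5 : ℝ) := by
      push_cast; linarith
    exact_mod_cast this
  exact ⟨(⌊q₀⌋ + ⌊q₂⌋ - 2 * ⌊q₁⌋ - 2 * (p * m) - 1).toNat, by omega, by omega⟩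


/-! ### The colouring -/

/-- Corollary: let p ∈ {47, 59, 67, 71, 73, 79, 83}, α_red > 0 with
α_red² ∈ [1, 1.5] (mod p), and α_blue > 0 with α_blue² = b + ε where b is an
integer not divisible by p and 0 ≤ ε ≤ (4p⁵)⁻¹. Let α = α_blue/α_red. Then:
(1) if ε = 0, then E^n ↛ (ℓ_3, αℓ_{p²});
(2) if ε > 0 and p = 59, then E^n ↛ (ℓ_3, αℓ_{2p²−2p+1}). -/
theorem red_blue_corollary (p : ℕ) (hp : p ∈ ({47, 59, 67, 71, 73, 79, 83} : Finset ℕ))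
    (αred αblue : ℝ) (hαred : 0 < αred) (hαblue : 0 < αblue)
    (m : ℤ) (hm₁ : 1 ≤ αred ^ 2 - (p : ℝ) * m) (hm₂ : αred ^ 2 - (p : ℝ) * m ≤ 1.5)
    (b : ℤ) (ε : ℝ) (hb : ¬ (p : ℤ) ∣ b) (hαb : αblue ^ 2 = (b : ℝ) + ε)
    (hε₀ : 0 ≤ ε) (hε₁ : ε ≤ (4 * (p : ℝ) ^ 5)⁻¹)
    (n : ℕ) (hn : 0 < n) :
    (ε = 0 →
      ∃ red : EuclideanSpace ℝ (Fin n) → Prop,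
        (¬ ∃ (x v : EuclideanSpace ℝ (Fin n)), ‖v‖ = 1 ∧
          ∀ k : ℕ, k < 3 → red (x + (k : ℝ) • v)) ∧
        (¬ ∃ (x v : EuclideanSpace ℝ (Fin n)), ‖v‖ = αblue / αred ∧
          ∀ k : ℕ, k < p ^ 2 → ¬ red (x + (k : ℝ) • v))) ∧
    (0 < ε → p = 59 →
      ∃ red : EuclideanSpace ℝ (Fin n) → Prop,
        (¬ ∃ (x v : EuclideanSpace ℝ (Fin n)), ‖v‖ = 1 ∧
          ∀ k : ℕ, k < 3 → red (x + (k : ℝ) • v)) ∧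
        (¬ ∃ (x v : EuclideanSpace ℝ (Fin n)), ‖v‖ = αblue / αred ∧
          ∀ k : ℕ, k < 2 * p ^ 2 - 2 * p + 1 → ¬ red (x + (k : ℝ) • v))) := by
  obtain ⟨hprime, hp2, g, R, hR⟩ := exists_redResidues p hp
  have : Fact p.Prime := ⟨hprime⟩
  let red : EuclideanSpace ℝ (Fin n) → Prop := fun x =>
    ∃ r ∈ R, ((⌊αred ^ 2 * ‖x‖ ^ 2⌋ : ℤ) : ZMod p) = (r : ZMod p)
  have hred : ¬ ∃ (x v : EuclideanSpace ℝ (Fin n)), ‖v‖ = 1 ∧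
      ∀ k : ℕ, k < 3 → red (x + (k : ℝ) • v) := by
    rintro ⟨x, v, hv, h⟩
    obtain ⟨r₀, hr₀, e₀⟩ := h 0 (by norm_num)
    obtain ⟨r₁, hr₁, e₁⟩ := h 1 (by norm_num)
    obtain ⟨r₂, hr₂, e₂⟩ := h 2 (by norm_num)
    have hdiff : αred ^ 2 * ‖x + ((0 : ℕ) : ℝ) • v‖ ^ 2
        - 2 * (αred ^ 2 * ‖x + ((1 : ℕ) : ℝ) • v‖ ^ 2)
        + αred ^ 2 * ‖x + ((2 : ℕ) : ℝ) • v‖ ^ 2 = 2 * αred ^ 2 := by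
      simp only [norm_sq_progression, hv]; push_cast; ring
    obtain ⟨i, hi, hfl⟩ := floor_second_difference _ _ _ p m
      (by rw [hdiff]; linarith) (by rw [hdiff]; norm_num at hm₂ ⊢; linarith)
    refine hR.1 r₀ hr₀ r₁ hr₁ r₂ hr₂ i hi ((ZMod.natCast_eq_natCast_iff' _ _ p).1 ?_)
    have := congrArg (Int.cast : ℤ → ZMod p) hfl
    push_cast at this e₀ e₁ e₂ ⊢
    rw [e₀, e₁, e₂] at this
    rw [this]
    simp
    ring
  have hblue : ∀ x v : EuclideanSpace ℝ (Fin n), ‖v‖ = αblue / αred →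
      ∃ k : ℕ, red (x + (k : ℝ) • v) ∧ (ε = 0 → k < p ^ 2) ∧ k < 2 * p ^ 2 - 2 * p + 1 := by
    intro x v hv
    obtain ⟨c, y, hcy⟩ := exists_linear_floor p (αred ^ 2 * ‖x‖ ^ 2)
      (2 * αred ^ 2 * inner ℝ x v) ε hε₀ hε₁
    obtain ⟨s, r, hr, hs⟩ := hR.exists_quadratic hp2 (b : ZMod p) c y
      (by rwa [Ne, ZMod.intCast_zmod_eq_zero_iff_dvd])
    obtain ⟨k, hk, hfl, hk₀, hk₁⟩ := hcy s
    refine ⟨k, ⟨r, hr, ?_⟩, hk₀, hk₁⟩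
    have hq : αred ^ 2 * ‖x + (k : ℝ) • v‖ ^ 2 = αred ^ 2 * ‖x‖ ^ 2
        + 2 * αred ^ 2 * inner ℝ x v * k + ε * (k : ℝ) ^ 2 + ((b * (k : ℤ) ^ 2 : ℤ) : ℝ) := by
      have h1 : αred ^ 2 * (αblue / αred) ^ 2 = b + ε := by
        rw [← hαb]; field_simp
      rw [norm_sq_progression, hv]
      push_cast
      linear_combination (k : ℝ) ^ 2 * h1
    rw [hq, Int.floor_add_intCast, Int.cast_add, hfl, ← hs, ← hk]
    push_cast
    ring
  refine ⟨fun h0 => ⟨red, hred, ?_⟩, fun _ _ => ⟨red, hred, ?_⟩⟩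
  · rintro ⟨x, v, hv, h⟩
    obtain ⟨k, hk, hk₀, -⟩ := hblue x v hv
    exact h k (hk₀ h0) hk
  · rintro ⟨x, v, hv, h⟩
    obtain ⟨k, hk, -, hk₁⟩ := hblue x v hv
    exact h k hk₁ hk
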